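/- arXiv:1106.4870 — 2 statements merged into one kernel-verified Lean document; each statement's English description precedes it below -/
import Mathlib

section
/- Let k ≥ 1, n = 2k+1, and let Q be gratifying in x_1,…,x_n with defining polynomial P = 1, i.e. Q = ∏_{1≤i≠j≤n}(1 − x_i/x_j) / [∏_{i=1}^n (1 − x_i) · ∏_{1≤i<j≤n}(1 − x_i x_j)]. For the partition M_1 = {{1,k+1},…,{k,2k},{2k+1}}, the rational function Q_{M_1} = Q·(1 − x_{2k+1})·∏_{e=1}^k (1 − x_e x_{k+e}) evaluated at x_e = x_{k+e}^{−1} (1 ≤ e ≤ k) and x_{2k+1} = 1 satisfies Q_{M_1} = (−1)^k · B_k(x_{k+1},…,x_{2k})^2. -/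
open Finset

/-- The variable `xᵢ` inside the field `ℚ(x₁,…,xₙ)` of rational functions. -/
noncomputable def xF (n : ℕ) (i : Fin n) : FractionRing (MvPolynomial (Fin n) ℚ) :=
  algebraMap (MvPolynomial (Fin n) ℚ) _ (MvPolynomial.X i)

/-- The substitution associated with the partition
`M₁ = {{1,k+1},…,{k,2k},{2k+1}}` of `{1,…,2k+1}` (`0`-based: blocks `{e, k+e}`
for `e < k` and the singleton `{2k}`): `x_e = x_{k+e}⁻¹` for `e < k`,
`x_{2k+1} = 1`, the remaining variables are kept. -/
noncomputable def v12 (k : ℕ) (i : Fin (2 * k + 1)) :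
    FractionRing (MvPolynomial (Fin (2 * k + 1)) ℚ) :=
  if h : (i : ℕ) < k then (xF (2 * k + 1) ⟨(i : ℕ) + k, by omega⟩)⁻¹
  else if (i : ℕ) = 2 * k then 1
  else xF (2 * k + 1) i

/-!
If `σ` is an involution of the indices and `v (σ i) = (v i)⁻¹`, then
`1 - v i / v j = 1 - v i * v (σ j)`. So the numerator of `Q` is the product of the
`1 - v i * v j` over all ordered pairs with `j ≠ σ i`: its diagonal part is made of the
`1 - v i ^ 2`, and its off-diagonal part is the square of the product over unordered pairs.
Dividing by the surviving denominator leaves `1 + v i` for each non-fixed `i` and `1 - v i * v j`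
for each unordered pair which is not a block.

For the point `(y⁻¹, y, 1)` these factors group into `-(y e⁻¹ - y e) ^ 2` for each `e` and
`(z f - z e) ^ 2`, with `z = y + y⁻¹`, for each `e < f`. On the other side
`y⁻¹ ^ (j + 1) - y ^ (j + 1)` is `y⁻¹ - y` times a monic polynomial of degree `j` in `z` (a rescaled
Chebyshev polynomial), so `B_k` is `∏ (y e⁻¹ - y e)` times the Vandermonde determinant of `z`.
-/

section PairProducts

variable {ι M : Type*} [Fintype ι] [CommMonoid M]

theorem prod_offDiag_eq_prod_prod_compl [DecidableEq ι] (f : ι → ι → M) :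
    ∏ p ∈ univ.offDiag, f p.1 p.2 = ∏ i, ∏ j ∈ {i}ᶜ, f i j :=
  prod_finset_product' _ _ _ (by simp [eq_comm])

theorem prod_prod_eq_prod_diag_mul_prod_prod_Ioi [LinearOrder ι] [LocallyFiniteOrderTop ι]
    [LocallyFiniteOrderBot ι] (f : ι → ι → M) :
    ∏ i, ∏ j, f i j = (∏ i, f i i) * ∏ i, ∏ j ∈ Ioi i, f i j * f j i := by
  rw [prod_prod_Ioi_mul_eq_prod_prod_off_diag fun i j => f j i, ← prod_mul_distrib]
  simp only [← Fintype.prod_eq_mul_prod_compl]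

end PairProducts

section InvolutiveSubstitution

variable {ι K : Type*} [Fintype ι] [LinearOrder ι] [LocallyFiniteOrderTop ι]
  [LocallyFiniteOrderBot ι] [Field K] {σ : ι → ι} {v : ι → K}

theorem prod_one_sub_div_of_involutive (hσ : Function.Involutive σ) (hv : ∀ i, v (σ i) = (v i)⁻¹) :
    ∏ i, ∏ j ∈ {i}ᶜ, (1 - v i / v j) =
      (∏ i with σ i ≠ i, (1 - v i ^ 2)) *
        (∏ i, ∏ j ∈ Ioi i with σ i ≠ j, (1 - v i * v j)) ^ 2 := by
  have reindex (i : ι) :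
      ∏ j ∈ {i}ᶜ, (1 - v i / v j) = ∏ j, if σ i ≠ j then 1 - v i * v j else 1 := by
    rw [← prod_filter]
    refine prod_nbij' σ σ ?_ ?_ (fun j _ => hσ j) (fun j _ => hσ j) ?_
    · simp [hσ.injective.eq_iff, eq_comm]
    · simp [hσ.eq_iff, eq_comm (a := i)]
    · simp [hv, div_eq_mul_inv]
  have symmetric (i j : ι) : (if σ j ≠ i then 1 - v j * v i else 1) =
      if σ i ≠ j then 1 - v i * v j else 1 := by
    simp only [ne_eq, hσ.eq_iff, eq_comm (a := j), mul_comm (v j)]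
  simp only [reindex, prod_prod_eq_prod_diag_mul_prod_prod_Ioi, symmetric, ← sq, prod_pow,
    prod_filter]

theorem prod_one_sub_div_div_of_involutive (hσ : Function.Involutive σ)
    (hv : ∀ i, v (σ i) = (v i)⁻¹)
    (hne : ∀ i j, σ i ≠ j → v i * v j ≠ 1) :
    (∏ i, ∏ j ∈ {i}ᶜ, (1 - v i / v j)) /
        ((∏ i with σ i ≠ i, (1 - v i)) * ∏ i, ∏ j ∈ Ioi i with σ i ≠ j, (1 - v i * v j)) =
      (∏ i with σ i ≠ i, (1 + v i)) * ∏ i, ∏ j ∈ Ioi i with σ i ≠ j, (1 - v i * v j) := by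
  have hsingle : ∏ i with σ i ≠ i, (1 - v i) ≠ 0 := by
    refine prod_ne_zero_iff.mpr fun i hi h => hne i i (mem_filter.mp hi).2 ?_
    rw [← sub_eq_zero.mp h, one_mul]
  have hpair : ∏ i, ∏ j ∈ Ioi i with σ i ≠ j, (1 - v i * v j) ≠ 0 :=
    prod_ne_zero_iff.mpr fun i _ => prod_ne_zero_iff.mpr fun j hj =>
      sub_ne_zero.mpr (hne i j (mem_filter.mp hj).2).symm
  have hsq : ∏ i with σ i ≠ i, (1 - v i ^ 2) =
      (∏ i with σ i ≠ i, (1 - v i)) * ∏ i with σ i ≠ i, (1 + v i) := by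
    rw [← prod_mul_distrib]
    exact prod_congr rfl fun i _ => by ring
  rw [prod_one_sub_div_of_involutive hσ hv, hsq, div_eq_iff (mul_ne_zero hsingle hpair)]
  ring

end InvolutiveSubstitution

section SymplecticDenominator

open Polynomial

theorem isMonicOfDegree_chebyshev_S (R : Type*) [CommRing R] [Nontrivial R] (n : ℕ) :
    IsMonicOfDegree (Chebyshev.S R n) n := by
  induction n using Nat.twoStepInduction with
  | zero => simp
  | one => simpa using isMonicOfDegree_X R
  | more n ih ih' =>
    have hX := (isMonicOfDegree_X R).mul ih'
    rw [show 1 + (n + 1) = n + 2 by omega] at hX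
    have hrec := Chebyshev.S_add_two R n
    push_cast at hX ⊢
    rw [hrec]
    refine IsMonicOfDegree.sub hX ?_
    rw [ih.natDegree_eq]
    omega

variable {R : Type*} [CommRing R]

theorem sub_mul_eval_chebyshev_S {a b : R} (hab : a * b = 1) (n : ℕ) :
    (b - a) * (Chebyshev.S R n).eval (a + b) = b ^ (n + 1) - a ^ (n + 1) := by
  induction n using Nat.twoStepInduction with
  | zero => simp
  | one =>
    rw [Nat.cast_one, Chebyshev.S_one, eval_X]
    ring
  | more n ih ih' =>
    have hrec := Chebyshev.S_add_two R n
    push_cast at ih' ⊢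
    rw [hrec, eval_sub, eval_mul, eval_X]
    linear_combination (a + b) * ih' - ih + (b ^ (n + 1) - a ^ (n + 1)) * hab

theorem det_pow_sub_pow {k : ℕ} (a b : Fin k → R) (hab : ∀ i, a i * b i = 1) :
    Matrix.det (Matrix.of fun i j : Fin k => b i ^ ((j : ℕ) + 1) - a i ^ ((j : ℕ) + 1)) =
      (∏ i, (b i - a i)) * ∏ i, ∏ j ∈ Ioi i, ((a j + b j) - (a i + b i)) := by
  nontriviality R
  have hS := isMonicOfDegree_chebyshev_S R
  simp only [← sub_mul_eval_chebyshev_S (hab _)]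
  rw [← Matrix.det_vandermonde (fun i => a i + b i),
    Matrix.det_eval_matrixOfPolynomials_eq_det_vandermonde _
      (fun j : Fin k => Chebyshev.S R (j : ℕ)) (fun j => (hS j).natDegree_eq)
      (fun j => (hS j).monic),
    ← Matrix.det_mul_column]
  rfl

end SymplecticDenominator

section Blocks

variable {k : ℕ}

/-- The smaller index of the `e`-th two-element block of `M₁`. -/
def lowerIndex (e : Fin k) : Fin (2 * k + 1) := ⟨e, by omega⟩

/-- The larger index of the `e`-th two-element block of `M₁`. -/
def upperIndex (e : Fin k) : Fin (2 * k + 1) := ⟨k + e, by omega⟩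

/-- The involution of the indices whose orbits are the blocks of `M₁`. -/
def partner (i : Fin (2 * k + 1)) : Fin (2 * k + 1) :=
  if h : (i : ℕ) < k then ⟨i + k, by omega⟩
  else if (i : ℕ) < 2 * k then ⟨i - k, by omega⟩
  else i

@[simp] theorem val_lowerIndex (e : Fin k) : (lowerIndex e : ℕ) = e := rfl

@[simp] theorem val_upperIndex (e : Fin k) : (upperIndex e : ℕ) = k + e := rfl

@[simp] theorem lowerIndex_inj {e f : Fin k} : lowerIndex e = lowerIndex f ↔ e = f := by
  grind [val_lowerIndex]

@[simp] theorem upperIndex_inj {e f : Fin k} : upperIndex e = upperIndex f ↔ e = f := by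
  grind [val_upperIndex]

@[simp] theorem lowerIndex_ne_upperIndex (e f : Fin k) : lowerIndex e ≠ upperIndex f := by
  grind [val_lowerIndex, val_upperIndex]

@[simp] theorem upperIndex_ne_lowerIndex (e f : Fin k) : upperIndex e ≠ lowerIndex f :=
  (lowerIndex_ne_upperIndex f e).symm

@[simp] theorem lowerIndex_ne_last (e : Fin k) : lowerIndex e ≠ Fin.last _ := by
  grind [val_lowerIndex]

@[simp] theorem upperIndex_ne_last (e : Fin k) : upperIndex e ≠ Fin.last _ := by
  grind [val_upperIndex]

theorem val_partner (i : Fin (2 * k + 1)) : (partner i : ℕ) =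
    if (i : ℕ) < k then i + k else if (i : ℕ) < 2 * k then i - k else i := by
  grind [partner]

theorem partner_involutive : Function.Involutive (partner (k := k)) := by
  intro i
  grind [val_partner]

theorem partner_ne_self_iff {i : Fin (2 * k + 1)} : partner i ≠ i ↔ (i : ℕ) ≠ 2 * k := by
  grind [val_partner]

theorem partner_eq_iff_of_lt {i j : Fin (2 * k + 1)} (hij : i < j) :
    partner i = j ↔ (i : ℕ) + k = j ∧ (i : ℕ) < k := by
  grind [val_partner]

@[simp] theorem partner_lowerIndex (e : Fin k) : partner (lowerIndex e) = upperIndex e := by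
  grind [val_partner, val_lowerIndex, val_upperIndex]

@[simp] theorem partner_upperIndex (e : Fin k) : partner (upperIndex e) = lowerIndex e := by
  grind [val_partner, val_lowerIndex, val_upperIndex]

@[simp] theorem partner_last : partner (Fin.last (2 * k)) = Fin.last _ := by
  grind [val_partner]

theorem forall_index_iff {P : Fin (2 * k + 1) → Prop} :
    (∀ i, P i) ↔
      (∀ e : Fin k, P (lowerIndex e)) ∧ (∀ e : Fin k, P (upperIndex e)) ∧ P (Fin.last _) := by
  refine ⟨fun h => ⟨fun _ => h _, fun _ => h _, h _⟩, fun ⟨hlower, hupper, hlast⟩ i => ?_⟩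
  rcases lt_trichotomy (i : ℕ) (2 * k) with hi | hi | hi
  · rcases lt_or_ge (i : ℕ) k with hik | hik
    · exact hlower ⟨i, hik⟩
    · convert hupper ⟨i - k, by omega⟩
      grind [val_upperIndex]
  · rwa [show i = Fin.last _ from Fin.ext hi]
  · omega

section Products

variable {M : Type*} [CommMonoid M]

theorem prod_index (f : Fin (2 * k + 1) → M) :
    ∏ i, f i =
      (∏ e : Fin k, f (lowerIndex e)) * (∏ e : Fin k, f (upperIndex e)) * f (Fin.last _) := by
  rw [Fin.prod_univ_castSucc, ← (finCongr (two_mul k).symm).prod_comp, Fin.prod_univ_add]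
  rfl

theorem prod_Ioi_lowerIndex (e : Fin k) (F : Fin (2 * k + 1) → M) :
    ∏ j ∈ Ioi (lowerIndex e), F j =
      (∏ f ∈ Ioi e, F (lowerIndex f)) * (∏ f : Fin k, F (upperIndex f)) * F (Fin.last _) := by
  have hlower (f : Fin k) : lowerIndex e < lowerIndex f ↔ e < f := Iff.rfl
  have hupper (f : Fin k) : lowerIndex e < upperIndex f := by
    grind [val_lowerIndex, val_upperIndex]
  have hlast : lowerIndex e < Fin.last (2 * k) := by grind [val_lowerIndex]
  simp only [← filter_lt_eq_Ioi, prod_filter, prod_index, hlower, hupper, hlast, if_true]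

theorem prod_Ioi_upperIndex (e : Fin k) (F : Fin (2 * k + 1) → M) :
    ∏ j ∈ Ioi (upperIndex e), F j = (∏ f ∈ Ioi e, F (upperIndex f)) * F (Fin.last _) := by
  have hlower (f : Fin k) : ¬upperIndex e < lowerIndex f := by
    grind [val_lowerIndex, val_upperIndex]
  have hupper (f : Fin k) : upperIndex e < upperIndex f ↔ e < f := by grind [val_upperIndex]
  have hlast : upperIndex e < Fin.last (2 * k) := by grind [val_upperIndex]
  simp only [← filter_lt_eq_Ioi, prod_filter, prod_index, hlower, hupper, hlast, if_true,
    if_false, prod_const_one, one_mul]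

theorem prod_prod_Ioi_index (F : Fin (2 * k + 1) → Fin (2 * k + 1) → M) :
    ∏ i, ∏ j ∈ Ioi i, F i j =
      (∏ e : Fin k, F (lowerIndex e) (upperIndex e) *
          (F (lowerIndex e) (Fin.last _) * F (upperIndex e) (Fin.last _))) *
        ∏ e : Fin k, ∏ f ∈ Ioi e, F (lowerIndex e) (lowerIndex f) *
          F (upperIndex e) (upperIndex f) *
            (F (lowerIndex e) (upperIndex f) * F (lowerIndex f) (upperIndex e)) := by
  have cross : ∏ e : Fin k, ∏ f : Fin k, F (lowerIndex e) (upperIndex f) =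
      (∏ e : Fin k, F (lowerIndex e) (upperIndex e)) * ∏ e : Fin k, ∏ f ∈ Ioi e,
        F (lowerIndex e) (upperIndex f) * F (lowerIndex f) (upperIndex e) :=
    prod_prod_eq_prod_diag_mul_prod_prod_Ioi _
  have last : ∏ j ∈ Ioi (Fin.last (2 * k)), F (Fin.last _) j = 1 := by
    rw [← Fin.top_eq_last, Ioi_top, prod_empty]
  simp only [prod_index, prod_Ioi_lowerIndex, prod_Ioi_upperIndex, last, prod_mul_distrib,
    mul_one] at cross ⊢
  rw [cross]
  ac_rfl

end Products

section PairedPoint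

variable {K : Type*} [Field K]

/-- The point `(y⁻¹, y, 1)`: the values which the substitution attached to `M₁` gives to the
variables, when those kept take the values `y`. -/
def pairedPoint (y : Fin k → K) (i : Fin (2 * k + 1)) : K :=
  if h : (i : ℕ) < k then (y ⟨i, h⟩)⁻¹
  else if h' : (i : ℕ) < 2 * k then y ⟨i - k, by omega⟩
  else 1

variable (y : Fin k → K)

@[simp] theorem pairedPoint_lowerIndex (e : Fin k) : pairedPoint y (lowerIndex e) = (y e)⁻¹ := by
  simp [pairedPoint]

@[simp] theorem pairedPoint_upperIndex (e : Fin k) : pairedPoint y (upperIndex e) = y e := by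
  have hupper : k + (e : ℕ) < 2 * k := by omega
  simp [pairedPoint, hupper]

@[simp] theorem pairedPoint_last : pairedPoint y (Fin.last _) = 1 := by
  have hlower : ¬2 * k < k := by omega
  simp [pairedPoint, hlower]

theorem pairedPoint_partner (i : Fin (2 * k + 1)) :
    pairedPoint y (partner i) = (pairedPoint y i)⁻¹ := by
  revert i
  simp [forall_index_iff]

theorem prod_partner_ne_self_one_add_pairedPoint :
    ∏ i with partner i ≠ i, (1 + pairedPoint y i) = ∏ e, (1 + (y e)⁻¹) * (1 + y e) := by
  simp [prod_filter, prod_index, prod_mul_distrib]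

theorem prod_prod_Ioi_one_sub_pairedPoint_mul :
    ∏ i, ∏ j ∈ Ioi i with partner i ≠ j, (1 - pairedPoint y i * pairedPoint y j) =
      (∏ e, (1 - (y e)⁻¹) * (1 - y e)) *
        ∏ e, ∏ f ∈ Ioi e, (1 - (y e)⁻¹ * (y f)⁻¹) * (1 - y e * y f) *
          ((1 - (y e)⁻¹ * y f) * (1 - (y f)⁻¹ * y e)) := by
  simp only [prod_filter]
  rw [prod_prod_Ioi_index]
  congr 1
  · simp
  · refine prod_congr rfl fun e _ => prod_congr rfl fun f hf => ?_
    simp [(mem_Ioi.mp hf).ne, (mem_Ioi.mp hf).ne']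

variable {y}

theorem pairedPoint_mul_ne_one (hzero : ∀ e, y e ≠ 0)
    (hmul : ∀ e f, y e * y f ≠ 1) (hinj : Function.Injective y) (i j : Fin (2 * k + 1))
    (hij : partner i ≠ j) : pairedPoint y i * pairedPoint y j ≠ 1 := by
  have hone (e : Fin k) : y e ≠ 1 := fun h => hmul e e (by rw [h, one_mul])
  revert i j
  have hinv_mul (e f : Fin k) : (y e)⁻¹ * y f = 1 ↔ e = f := by
    rw [inv_mul_eq_one₀ (hzero e), hinj.eq_iff]
  have hmul_inv (e f : Fin k) : y e * (y f)⁻¹ = 1 ↔ e = f := by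
    rw [mul_inv_eq_one₀ (hzero f), hinj.eq_iff]
  have hinv_mul_inv (e f : Fin k) : (y e)⁻¹ * (y f)⁻¹ ≠ 1 := by
    rw [← mul_inv, ne_eq, inv_eq_one]
    exact hmul e f
  simp [forall_index_iff, hone, hmul, hinv_mul, hmul_inv, hinv_mul_inv]

theorem prod_one_add_mul_prod_one_sub_pairedPoint (hzero : ∀ e, y e ≠ 0) :
    (∏ i with partner i ≠ i, (1 + pairedPoint y i)) *
        ∏ i, ∏ j ∈ Ioi i with partner i ≠ j, (1 - pairedPoint y i * pairedPoint y j) =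
      (-1) ^ k * ((∏ e, ((y e)⁻¹ - y e)) *
        ∏ e, ∏ f ∈ Ioi e, ((y f + (y f)⁻¹) - (y e + (y e)⁻¹))) ^ 2 := by
  have hblock (e : Fin k) : (1 + (y e)⁻¹) * (1 + y e) * ((1 - (y e)⁻¹) * (1 - y e)) =
      -1 * ((y e)⁻¹ - y e) ^ 2 := by
    have hye := hzero e
    field_simp
    ring
  have hpair (e f : Fin k) : (1 - (y e)⁻¹ * (y f)⁻¹) * (1 - y e * y f) *
        ((1 - (y e)⁻¹ * y f) * (1 - (y f)⁻¹ * y e)) =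
      ((y f + (y f)⁻¹) - (y e + (y e)⁻¹)) ^ 2 := by
    have hye := hzero e
    have hyf := hzero f
    field_simp
    ring
  have hblocks : (∏ e, (1 + (y e)⁻¹) * (1 + y e)) * ∏ e, (1 - (y e)⁻¹) * (1 - y e) =
      (-1) ^ k * (∏ e, ((y e)⁻¹ - y e)) ^ 2 := by
    rw [← prod_mul_distrib, prod_congr rfl fun e _ => hblock e, prod_mul_distrib, Fin.prod_const,
      prod_pow]
  rw [prod_partner_ne_self_one_add_pairedPoint, prod_prod_Ioi_one_sub_pairedPoint_mul, ← mul_assoc,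
    hblocks, mul_pow, mul_assoc]
  simp only [hpair, prod_pow]

end PairedPoint

end Blocks

theorem stmt_12_general {K : Type*} [Field K] {k : ℕ} (y : Fin k → K) (hzero : ∀ e, y e ≠ 0)
    (hmul : ∀ e f, y e * y f ≠ 1) (hinj : Function.Injective y) :
    (∏ p ∈ (univ : Finset (Fin (2 * k + 1))).offDiag,
        (1 - pairedPoint y p.1 / pairedPoint y p.2)) /
      ((∏ i ∈ univ.filter (fun i : Fin (2 * k + 1) => (i : ℕ) ≠ 2 * k),
          (1 - pairedPoint y i)) *
        ∏ p ∈ univ.filter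
            (fun p : Fin (2 * k + 1) × Fin (2 * k + 1) =>
              p.1 < p.2 ∧ ¬((p.1 : ℕ) + k = (p.2 : ℕ) ∧ (p.1 : ℕ) < k)),
          (1 - pairedPoint y p.1 * pairedPoint y p.2))
    = (-1) ^ k *
        Matrix.det (Matrix.of fun i j : Fin k =>
          (y i)⁻¹ ^ ((j : ℕ) + 1) - y i ^ ((j : ℕ) + 1)) ^ 2 := by
  have hnum : ∏ p ∈ (univ : Finset (Fin (2 * k + 1))).offDiag,
        (1 - pairedPoint y p.1 / pairedPoint y p.2) =
      ∏ i, ∏ j ∈ {i}ᶜ, (1 - pairedPoint y i / pairedPoint y j) :=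
    prod_offDiag_eq_prod_prod_compl fun i j => 1 - pairedPoint y i / pairedPoint y j
  have hpairs : ∏ p ∈ univ.filter (fun p : Fin (2 * k + 1) × Fin (2 * k + 1) =>
          p.1 < p.2 ∧ ¬((p.1 : ℕ) + k = (p.2 : ℕ) ∧ (p.1 : ℕ) < k)),
        (1 - pairedPoint y p.1 * pairedPoint y p.2) =
      ∏ i, ∏ j ∈ Ioi i with partner i ≠ j, (1 - pairedPoint y i * pairedPoint y j) := by
    refine prod_finset_product' _ univ (fun i => {j ∈ Ioi i | partner i ≠ j})
      (f := fun i j => 1 - pairedPoint y i * pairedPoint y j) fun p => ?_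
    simp +contextual [partner_eq_iff_of_lt]
  simp only [hnum, hpairs, ← partner_ne_self_iff]
  rw [prod_one_sub_div_div_of_involutive partner_involutive (pairedPoint_partner y)
      (pairedPoint_mul_ne_one hzero hmul hinj),
    prod_one_add_mul_prod_one_sub_pairedPoint hzero,
    det_pow_sub_pow y (fun i => (y i)⁻¹) fun i => mul_inv_cancel₀ (hzero i)]

section GenericPoint

variable (n : ℕ)

theorem xF_injective : Function.Injective (xF n) :=
  (IsFractionRing.injective _ _).comp MvPolynomial.X_injective

theorem xF_ne_zero (i : Fin n) : xF n i ≠ 0 := by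
  simp [xF]

theorem xF_mul_xF_ne_one (i j : Fin n) : xF n i * xF n j ≠ 1 := by
  intro h
  have hX : (MvPolynomial.X i * MvPolynomial.X j : MvPolynomial (Fin n) ℚ) = 1 :=
    IsFractionRing.injective _ (FractionRing (MvPolynomial (Fin n) ℚ))
      (by rwa [map_one, map_mul])
  simpa using congrArg (MvPolynomial.eval 0) hX

theorem v12_eq_pairedPoint (k : ℕ) :
    v12 k = pairedPoint fun e => xF (2 * k + 1) (upperIndex e) := by
  ext i
  revert i
  refine forall_index_iff.mpr ⟨fun e => ?_, fun e => ?_, ?_⟩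
  · have hindex : (⟨e + k, by omega⟩ : Fin (2 * k + 1)) = upperIndex e :=
      Fin.ext (add_comm _ _)
    rw [pairedPoint_lowerIndex, ← hindex]
    exact dif_pos e.isLt
  · have hlast : k + (e : ℕ) ≠ 2 * k := by omega
    simp [v12, hlast]
  · have hlower : ¬2 * k < k := by omega
    simp [v12, hlower]

end GenericPoint

/-- **Lemma 7 (odd case).**  Let `n = 2k+1` and let `Q` be gratifying with
`P = 1`.  For the partition `M₁ = {{1,k+1},…,{k,2k},{2k+1}}`, the rational
function `Q_{M₁} = Q·(1-x_{2k+1})·∏_{e=1}^k (1-x_e x_{k+e})` evaluated at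
`x_e = x_{k+e}⁻¹` and `x_{2k+1} = 1` (after cancelling the indicated
denominator factors, i.e. the surviving factors `(1-xᵢ)` are those with `i`
not the singleton and the surviving `(1-xᵢxⱼ)` those with `{i,j}` not a block
of `M₁`) satisfies `Q_{M₁} = (-1)^k · B_k(x_{k+1},…,x_{2k})²`, where
`B_k(x) = det(xᵢ^{-j} - xᵢ^{j})_{1≤i,j≤k}` (below `j` is `0`-based, so the
entries read `x_{k+i}^{-(j+1)} - x_{k+i}^{j+1}`). -/
theorem stmt_12 (k : ℕ) (hk : 1 ≤ k) :
    (∏ p ∈ (univ : Finset (Fin (2 * k + 1))).offDiag,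
        (1 - v12 k p.1 / v12 k p.2)) /
      ((∏ i ∈ univ.filter (fun i : Fin (2 * k + 1) => (i : ℕ) ≠ 2 * k),
          (1 - v12 k i)) *
        ∏ p ∈ univ.filter
            (fun p : Fin (2 * k + 1) × Fin (2 * k + 1) =>
              p.1 < p.2 ∧ ¬((p.1 : ℕ) + k = (p.2 : ℕ) ∧ (p.1 : ℕ) < k)),
          (1 - v12 k p.1 * v12 k p.2))
    = (-1) ^ k *
        Matrix.det (Matrix.of fun i j : Fin k =>
          (xF (2 * k + 1) (Fin.castLE (by omega) (Fin.natAdd k i)))⁻¹ ^ ((j : ℕ) + 1) -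
            xF (2 * k + 1) (Fin.castLE (by omega) (Fin.natAdd k i)) ^ ((j : ℕ) + 1)) ^ 2 := by
  rw [v12_eq_pairedPoint]
  exact stmt_12_general _ (fun _ => xF_ne_zero _ _) (fun _ _ => xF_mul_xF_ne_one _ _ _)
    fun _ _ h => upperIndex_inj.mp (xF_injective _ h)
end

section
/- For all integers k ≥ 1 and m ≥ 0, 2^m · det( C(2m, m−i+j) − C(2m, m−i−j) )_{1≤i,j≤k} = ∏_{j=0}^{2k} ∏_{i=1}^{m} (2i+j)/(i+j). -/
open Finset

/-- The binomial coefficient `C(N, r)` for an integer `r`, with the convention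
that it vanishes for `r < 0` (and, via `Nat.choose`, for `r > N`). -/
def binQ (N : ℕ) (r : ℤ) : ℚ :=
  if 0 ≤ r then (N.choose r.toNat : ℚ) else 0

/-!
Write `G n r = C(2n, n + r)` and `K n i j = G n (i - j) - G n (i + j)`. The matrix of the theorem is
`A = (K m i j)` with `1 ≤ i, j ≤ k`. The kernels `K n` are the powers of `K 1`, acting on odd
functions on `ℤ`, so multiplying `A` by the unitriangular matrix `(K j i 1)`, `0 ≤ j < k`, gives
`(K (m + j) i 1)` without changing the determinant. Now `K n i 1 = i / (n + 1) * G (n + 1) i`, and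
`G N i` is, up to factors depending on `N` or on `i` alone, the product of `t² - i²` over
`N < t ≤ m + k`. What remains is therefore a Vandermonde determinant in the squares `i²`, and all
factors collect into factorials.
-/

open scoped Nat

lemma binQ_natCast (N n : ℕ) : binQ N n = N.choose n := by
  simp [binQ]

lemma binQ_of_neg (N : ℕ) {r : ℤ} (hr : r < 0) : binQ N r = 0 :=
  if_neg hr.not_ge

lemma binQ_of_lt {N : ℕ} {r : ℤ} (hr : N < r) : binQ N r = 0 := by
  lift r to ℕ using by omega
  rw [binQ_natCast, Nat.choose_eq_zero_of_lt (by exact_mod_cast hr), Nat.cast_zero]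

lemma binQ_succ_succ (N : ℕ) (r : ℤ) : binQ (N + 1) (r + 1) = binQ N r + binQ N (r + 1) := by
  obtain hr | rfl | hr : r < -1 ∨ r = -1 ∨ 0 ≤ r := by omega
  · simp only [binQ_of_neg _ (show r < 0 by omega), binQ_of_neg _ (show r + 1 < 0 by omega),
      add_zero]
  · simp [binQ]
  · lift r to ℕ using hr
    rw [← Nat.cast_succ, binQ_natCast, binQ_natCast, binQ_natCast, Nat.choose_succ_succ',
      Nat.cast_add]

lemma binQ_succ_mul (N : ℕ) (r : ℤ) : binQ N (r + 1) * (r + 1) = binQ N r * (N - r) := by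
  obtain hr | rfl | hr | hr : r < -1 ∨ r = -1 ∨ N < r ∨ 0 ≤ r ∧ r ≤ N := by omega
  · rw [binQ_of_neg _ (by omega), binQ_of_neg _ (by omega), zero_mul, zero_mul]
  · simp [binQ]
  · rw [binQ_of_lt hr, binQ_of_lt (by omega), zero_mul, zero_mul]
  · lift r to ℕ using hr.1
    have hrN : r ≤ N := by omega
    have h := congrArg (Nat.cast (R := ℚ)) (Nat.choose_succ_right_eq N r)
    rw [← Nat.cast_succ, binQ_natCast, binQ_natCast]
    push_cast [Nat.cast_sub hrN] at h ⊢
    exact h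

lemma binQ_symm (N : ℕ) (r : ℤ) : binQ N (N - r) = binQ N r := by
  obtain hr | hr | hr : r < 0 ∨ N < r ∨ 0 ≤ r ∧ r ≤ N := by omega
  · rw [binQ_of_neg _ hr, binQ_of_lt (by omega)]
  · rw [binQ_of_lt hr, binQ_of_neg _ (by omega)]
  · lift r to ℕ using hr.1
    have hrN : r ≤ N := by omega
    rw [← Nat.cast_sub hrN, binQ_natCast, binQ_natCast, Nat.choose_symm hrN]

/-- `C(2n, n + r)`, the binomial coefficient at distance `r` from the centre of row `2n`.
It vanishes for `|r| > n`. -/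
def centeredChoose (n : ℕ) (r : ℤ) : ℚ :=
  binQ (2 * n) (n + r)

namespace centeredChoose

lemma neg (n : ℕ) (r : ℤ) : centeredChoose n (-r) = centeredChoose n r := by
  rw [centeredChoose, centeredChoose, ← binQ_symm]
  congr 1
  push_cast
  ring

lemma eq_zero_of_lt {n : ℕ} {r : ℤ} (h : n < r) : centeredChoose n r = 0 :=
  binQ_of_lt (by push_cast; omega)

lemma zero_left (r : ℤ) : centeredChoose 0 r = if r = 0 then 1 else 0 := by
  obtain hr | rfl | hr := lt_trichotomy r 0
  · rw [← neg, eq_zero_of_lt (by omega), if_neg hr.ne]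
  · simp [centeredChoose, binQ]
  · rw [eq_zero_of_lt hr, if_neg hr.ne']

lemma succ (n : ℕ) (r : ℤ) :
    centeredChoose (n + 1) r =
      centeredChoose n (r - 1) + 2 * centeredChoose n r + centeredChoose n (r + 1) := by
  have pascal₂ (s : ℤ) :
      binQ (2 * n + 2) (s + 1) = binQ (2 * n) (s - 1) + 2 * binQ (2 * n) s +
        binQ (2 * n) (s + 1) := by
    have h := binQ_succ_succ (2 * n) (s - 1)
    rw [sub_add_cancel] at h
    rw [binQ_succ_succ, binQ_succ_succ, h]
    ring
  have h := pascal₂ (n + r)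
  simp only [centeredChoose]
  convert h using 2 <;> (push_cast; ring_nf)

lemma succ_right_mul (n : ℕ) (r : ℤ) :
    centeredChoose n (r + 1) * (n + r + 1) = centeredChoose n r * (n - r) := by
  have h := binQ_succ_mul (2 * n) (n + r)
  rw [add_assoc] at h
  push_cast at h
  simp only [centeredChoose]
  linear_combination h

lemma sub_one_mul (n : ℕ) (r : ℤ) :
    centeredChoose n (r - 1) * (n - r + 1) = centeredChoose n r * (n + r) := by
  have h := succ_right_mul n (r - 1)
  rw [sub_add_cancel] at h
  push_cast at h
  linear_combination -h

lemma succ_left_mul (n : ℕ) (r : ℤ) :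
    centeredChoose (n + 1) r * ((n + 1) ^ 2 - r ^ 2) =
      (2 * n + 2) * (2 * n + 1) * centeredChoose n r := by
  rw [succ]
  linear_combination (n + 1 - r : ℚ) * succ_right_mul n r + (n + 1 + r : ℚ) * sub_one_mul n r

lemma mul_factorial_eq_mul_prod {n N : ℕ} (h : n ≤ N) (r : ℤ) :
    centeredChoose n r * (2 * N)! =
      (2 * n)! * centeredChoose N r * ∏ t ∈ Ico n N, ((t + 1 : ℚ) ^ 2 - r ^ 2) := by
  induction N, h using Nat.le_induction with
  | base => simp [mul_comm]
  | succ N hnN ih =>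
    rw [prod_Ico_succ_top hnN, show 2 * (N + 1) = 2 * N + 1 + 1 by ring, Nat.factorial_succ,
      Nat.factorial_succ]
    push_cast
    linear_combination (2 * N + 2 : ℚ) * (2 * N + 1) * ih - (2 * n)! *
      (∏ t ∈ Ico n N, ((t + 1 : ℚ) ^ 2 - r ^ 2)) * succ_left_mul N r

lemma natCast_eq_div {n r : ℕ} (h : r ≤ n) :
    centeredChoose n r = (2 * n)! / ((n + r)! * (n - r)!) := by
  rw [centeredChoose, ← Nat.cast_add, binQ_natCast, Nat.cast_choose ℚ (by omega),
    show 2 * n - (n + r) = n - r by omega]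

lemma self (n : ℕ) : centeredChoose n n = 1 := by
  rw [natCast_eq_div le_rfl, ← two_mul, Nat.sub_self, Nat.factorial_zero, Nat.cast_one, mul_one,
    div_self (by positivity)]

end centeredChoose

/-- `C(2n, n + i - j) - C(2n, n + i + j)`. By the reflection principle this counts, for `i, j ≥ 1`,
the walks from `j` to `i` avoiding `0` made of `2n` steps `± 1/2`. -/
def reflectedChoose (n : ℕ) (i j : ℤ) : ℚ :=
  centeredChoose n (i - j) - centeredChoose n (i + j)

namespace reflectedChoose

lemma neg_left (n : ℕ) (i j : ℤ) : reflectedChoose n (-i) j = -reflectedChoose n i j := by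
  rw [reflectedChoose, reflectedChoose, ← centeredChoose.neg n (i - j),
    ← centeredChoose.neg n (i + j)]
  ring_nf

lemma eq_zero_of_lt {n : ℕ} {i j : ℤ} (h : n + |j| < i) : reflectedChoose n i j = 0 := by
  have hj := le_abs_self j
  have hj' := neg_abs_le j
  rw [reflectedChoose, centeredChoose.eq_zero_of_lt (by omega),
    centeredChoose.eq_zero_of_lt (by omega), sub_zero]

lemma zero_left (i j : ℤ) :
    reflectedChoose 0 i j = (if j = i then 1 else 0) - (if j = -i then 1 else 0) := by
  rw [reflectedChoose, centeredChoose.zero_left, centeredChoose.zero_left]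
  congr 2 <;> exact propext ⟨by omega, by omega⟩

lemma succ (n : ℕ) (i j : ℤ) :
    reflectedChoose (n + 1) i j =
      reflectedChoose n (i - 1) j + 2 * reflectedChoose n i j + reflectedChoose n (i + 1) j := by
  simp only [reflectedChoose, centeredChoose.succ]
  ring_nf

lemma sum_zero_left_mul {f : ℤ → ℚ} (hf : f.Odd) {k : ℤ} (hk : ∀ i, k < i → f i = 0) (i : ℤ) :
    ∑ l ∈ Icc 1 k, reflectedChoose 0 i l * f l = f i := by
  simp only [zero_left, sub_mul, ite_mul, one_mul, zero_mul, sum_sub_distrib, sum_ite_eq', mem_Icc]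
  obtain hi | rfl | hi := lt_trichotomy i 0
  · rw [if_neg (by omega), zero_sub, hf, neg_eq_iff_eq_neg]
    split_ifs with h
    · rfl
    · rw [← hf, hk _ (by omega)]
  · simp [hf.map_zero]
  · rw [if_neg (c := 1 ≤ -i ∧ -i ≤ k) (by omega), sub_zero]
    split_ifs with h
    · rfl
    · rw [hk _ (by omega)]

/-- Both sides satisfy the recurrence `succ` in `(m, i)`; the bound on `k` makes the sum exhaust the
positive support of the odd function `reflectedChoose n · j`. -/
lemma sum_mul_eq_add (m : ℕ) {n : ℕ} {j k : ℤ} (hk : n + |j| ≤ k) (i : ℤ) :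
    ∑ l ∈ Icc 1 k, reflectedChoose m i l * reflectedChoose n l j = reflectedChoose (m + n) i j := by
  induction m generalizing i with
  | zero =>
    rw [zero_add]
    exact sum_zero_left_mul (f := (reflectedChoose n · j)) (neg_left n · j)
      (fun l hl ↦ eq_zero_of_lt (by omega)) i
  | succ m ih =>
    simp only [succ m, add_mul, sum_add_distrib, mul_assoc, ← mul_sum, ih, Nat.succ_add m n,
      succ (m + n)]

lemma eq_binQ_sub_binQ (n : ℕ) (i j : ℤ) :
    reflectedChoose n i j = binQ (2 * n) (n - i + j) - binQ (2 * n) (n - i - j) := by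
  rw [reflectedChoose, ← centeredChoose.neg n (i - j), ← centeredChoose.neg n (i + j),
    centeredChoose, centeredChoose]
  ring_nf

lemma one_right (n : ℕ) (i : ℤ) :
    reflectedChoose n i 1 = i / (n + 1) * centeredChoose (n + 1) i := by
  have hn : (n : ℚ) + 1 ≠ 0 := by positivity
  rw [reflectedChoose, div_mul_eq_mul_div, eq_div_iff hn, centeredChoose.succ]
  linear_combination centeredChoose.sub_one_mul n i - centeredChoose.succ_right_mul n i

end reflectedChoose

lemma sum_Icc_one_eq_sum_fin {M : Type*} [AddCommMonoid M] (k : ℕ) (f : ℤ → M) :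
    ∑ l ∈ Icc (1 : ℤ) k, f l = ∑ l : Fin k, f (l + 1) := by
  symm
  refine sum_bij (fun l _ ↦ (l : ℤ) + 1) (fun l _ ↦ mem_Icc.2 (by omega))
    (fun a _ b _ h ↦ Fin.ext (by omega)) (fun l hl ↦ ?_) (fun _ _ ↦ rfl)
  rw [mem_Icc] at hl
  exact ⟨⟨(l - 1).toNat, by omega⟩, mem_univ _, by dsimp only; omega⟩

lemma det_reflectedChoose_one_right (k : ℕ) :
    Matrix.det (Matrix.of fun i j : Fin k ↦ reflectedChoose j (i + 1) 1) = 1 := by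
  rw [Matrix.det_of_isUpperTriangular]
  · refine prod_eq_one fun i _ ↦ ?_
    rw [Matrix.of_apply, reflectedChoose, add_sub_cancel_right, centeredChoose.self,
      centeredChoose.eq_zero_of_lt (by omega), sub_zero]
  · intro i j hji
    have hji : (j : ℕ) < i := hji
    exact reflectedChoose.eq_zero_of_lt (by rw [abs_one]; omega)

lemma det_reflectedChoose_eq_det_add (k m : ℕ) :
    Matrix.det (Matrix.of fun i j : Fin k ↦ reflectedChoose m (i + 1) (j + 1)) =
      Matrix.det (Matrix.of fun i j : Fin k ↦ reflectedChoose (m + j) (i + 1) 1) := by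
  rw [← mul_one (Matrix.det _), ← det_reflectedChoose_one_right k, ← Matrix.det_mul]
  congr 1
  ext i j
  have hj : ((j : ℕ) : ℤ) + |1| ≤ (k : ℤ) := by rw [abs_one]; omega
  rw [Matrix.of_apply, ← reflectedChoose.sum_mul_eq_add m hj, sum_Icc_one_eq_sum_fin]
  rfl

open Polynomial in
lemma det_prod_Ico_sub {R : Type*} [CommRing R] (k : ℕ) (c x : ℕ → R) :
    Matrix.det (Matrix.of fun i j : Fin k ↦ ∏ t ∈ Ico (j + 1 : ℕ) k, (c t - x i)) =
      ∏ j ∈ range k, ∏ i ∈ range j, (x j - x i) := by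
  nontriviality R
  let p (j : Fin k) : R[X] := ∏ t ∈ Ico (j.rev + 1 : ℕ) k, (X + C (c t))
  have p_monic (j : Fin k) : (p j).Monic := monic_prod_of_monic _ _ fun t _ ↦ monic_X_add_C _
  have p_natDegree (j : Fin k) : (p j).natDegree = j := by
    rw [natDegree_prod_of_monic _ _ fun t _ ↦ monic_X_add_C _]
    simp only [natDegree_X_add_C, sum_const, Nat.card_Ico, smul_eq_mul, mul_one, Fin.val_rev]
    omega
  -- Reversing rows and columns puts the degrees in increasing order.
  calc
    _ = Matrix.det (Matrix.of fun i j : Fin k ↦ (p j).eval (-x i.rev)) := by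
      rw [← Matrix.det_submatrix_equiv_self Fin.revPerm]
      congr 1
      ext i j
      simp only [p, Matrix.submatrix_apply, Matrix.of_apply, Fin.revPerm_apply, eval_prod, eval_add,
        eval_X, eval_C, neg_add_eq_sub]
    _ = ∏ i : Fin k, ∏ j ∈ Ioi i, (x i.rev - x j.rev) := by
      rw [← Matrix.det_eval_matrixOfPolynomials_eq_det_vandermonde _ p p_natDegree p_monic,
        Matrix.det_vandermonde]
      simp only [neg_sub_neg]
    _ = ∏ j : Fin k, ∏ i ∈ Iio j, (x j - x i) := by
      refine Fintype.prod_equiv Fin.revPerm _ _ fun i ↦ ?_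
      rw [Fin.revPerm_apply, ← Fin.map_revPerm_Ioi, prod_map]
      rfl
    _ = _ := by
      rw [← Fin.prod_univ_eq_prod_range (fun j ↦ ∏ i ∈ range j, (x j - x i))]
      refine prod_congr rfl fun j _ ↦ ?_
      rw [← Nat.Iio_eq_range, ← Fin.map_valEmbedding_Iio, prod_map]
      rfl

lemma det_centeredChoose (k m : ℕ) (r : ℕ → ℤ) :
    Matrix.det (Matrix.of fun i j : Fin k ↦ centeredChoose (m + j + 1) (r i)) =
      ∏ j ∈ range k, (centeredChoose (m + k) (r j) * ((2 * (m + j + 1))! / (2 * (m + k))!) *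
        ∏ i ∈ range j, ((r j : ℚ) ^ 2 - r i ^ 2)) := by
  rw [prod_mul_distrib, prod_mul_distrib,
    ← det_prod_Ico_sub k (fun t ↦ ((t + m : ℕ) + 1 : ℚ) ^ 2) (fun i ↦ (r i : ℚ) ^ 2),
    ← Fin.prod_univ_eq_prod_range, ← Fin.prod_univ_eq_prod_range, mul_assoc, ← Matrix.det_mul_row,
    ← Matrix.det_mul_column]
  congr 1
  ext i j
  have h := centeredChoose.mul_factorial_eq_mul_prod (show m + j + 1 ≤ m + k by omega) (r i)
  rw [← eq_div_iff (by positivity), show m + (j : ℕ) + 1 = j + 1 + m by ring, add_comm m k,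
    ← prod_Ico_add'] at h
  simp only [Matrix.of_apply]
  rw [show m + (j : ℕ) + 1 = j + 1 + m by ring, add_comm m k, h]
  ring

lemma prod_range_sub_eq_factorial (n : ℕ) : ∏ i ∈ range n, ((n : ℚ) - i) = n ! := by
  rw [← prod_range_add_one_eq_factorial, ← prod_range_reflect (fun i ↦ i + 1), Nat.cast_prod]
  refine prod_congr rfl fun i hi ↦ ?_
  rw [mem_range] at hi
  rw [show n - 1 - i + 1 = n - i by omega, Nat.cast_sub hi.le]

lemma prod_range_sq_sub_sq (n : ℕ) :
    ∏ i ∈ range n, ((n + 1 : ℚ) ^ 2 - (i + 1) ^ 2) = ((2 * n + 1)! / (n + 1) : ℚ) := by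
  have h_add : ((n + 1)! : ℚ) * ∏ i ∈ range n, ((n : ℚ) + 2 + i) = (2 * n + 1)! := by
    have h := Nat.factorial_mul_ascFactorial (n + 1) n
    rw [Nat.ascFactorial_eq_prod_range, show n + 1 + n = 2 * n + 1 by ring] at h
    exact_mod_cast h
  calc
    _ = (∏ i ∈ range n, ((n : ℚ) - i)) * ∏ i ∈ range n, ((n : ℚ) + 2 + i) := by
      rw [← prod_mul_distrib]
      exact prod_congr rfl fun i _ ↦ by ring
    _ = _ := by
      rw [prod_range_sub_eq_factorial, ← h_add, Nat.factorial_succ]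
      push_cast
      field_simp

lemma det_reflectedChoose_add_one_right (k m : ℕ) :
    Matrix.det (Matrix.of fun i j : Fin k ↦ reflectedChoose (m + j) (i + 1) 1) =
      ∏ j ∈ range k, ((2 * (m + j + 1))! * (2 * j + 1)! : ℚ) /
        ((m + j + 1) * ((m + k + (j + 1))! * (m + k - (j + 1))!)) := by
  calc
    _ = Matrix.det (Matrix.of fun i j : Fin k ↦ (i + 1 : ℚ) *
          ((1 / (m + j + 1)) * centeredChoose (m + j + 1) (i + 1))) := by
      congr 1
      ext i j
      rw [Matrix.of_apply, Matrix.of_apply, reflectedChoose.one_right]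
      push_cast
      ring
    _ = (∏ j ∈ range k, (j + 1 : ℚ)) * ((∏ j ∈ range k, (1 / (m + j + 1) : ℚ)) *
          Matrix.det (Matrix.of fun i j : Fin k ↦ centeredChoose (m + j + 1) (i + 1))) := by
      rw [← Fin.prod_univ_eq_prod_range, ← Fin.prod_univ_eq_prod_range, ← Matrix.det_mul_row,
        ← Matrix.det_mul_column]
      rfl
    _ = _ := by
      rw [det_centeredChoose k m (fun i ↦ (i : ℤ) + 1), ← prod_mul_distrib, ← prod_mul_distrib]
      refine prod_congr rfl fun j hj ↦ ?_
      rw [mem_range] at hj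
      have hG := centeredChoose.natCast_eq_div (show j + 1 ≤ m + k by omega)
      push_cast at hG ⊢
      rw [prod_range_sq_sub_sq, hG]
      field_simp

lemma prod_range_two_mul {M : Type*} [CommMonoid M] (f : ℕ → M) (n : ℕ) :
    ∏ i ∈ range (2 * n), f i = ∏ i ∈ range n, f (2 * i) * f (2 * i + 1) := by
  induction n with
  | zero => rfl
  | succ n ih => rw [mul_add_one, prod_range_succ, prod_range_succ, ih, prod_range_succ, mul_assoc]

lemma prod_range_mul_factorial_mul_factorial (k m : ℕ) :
    ∏ j ∈ range k, (m + j + 1) * ((m + k + (j + 1))! * (m + k - (j + 1))!) =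
      ∏ j ∈ range k, (m + 2 * j + 1)! * (m + 2 * j + 2)! := by
  calc
    _ = (∏ j ∈ range k, (m + j + 1) * (m + j)!) * ∏ j ∈ range k, (m + (k + j) + 1)! := by
      have h_reflect : ∏ j ∈ range k, (m + k - (j + 1))! = ∏ j ∈ range k, (m + j)! := by
        rw [← prod_range_reflect]
        refine prod_congr rfl fun j hj ↦ ?_
        rw [mem_range] at hj
        congr 1
        omega
      simp only [prod_mul_distrib, h_reflect, add_assoc]
      ring
    _ = ∏ j ∈ range (2 * k), (m + j + 1)! := by
      rw [two_mul, prod_range_add]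
      rfl
    _ = _ := by
      rw [prod_range_two_mul]
      rfl

lemma det_reflectedChoose_eq_prod (k m : ℕ) :
    Matrix.det (Matrix.of fun i j : Fin k ↦ reflectedChoose m (i + 1) (j + 1)) =
      ∏ j ∈ range k, ((2 * (m + j + 1))! * (2 * j + 1)! : ℚ) /
        ((m + 2 * j + 1)! * (m + 2 * j + 2)!) := by
  rw [det_reflectedChoose_eq_det_add, det_reflectedChoose_add_one_right, prod_div_distrib,
    prod_div_distrib]
  congr 1
  exact_mod_cast prod_range_mul_factorial_mul_factorial k m

lemma prod_Icc_div_mul_prod_Icc_div (m n : ℕ) :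
    (∏ i ∈ Icc 1 m, ((2 * i + n : ℕ) : ℚ) / (i + n : ℕ)) *
        ∏ i ∈ Icc 1 m, ((2 * i + (n + 1) : ℕ) : ℚ) / (i + (n + 1) : ℕ) =
      ((2 * m + n + 1)! * n ! : ℚ) / ((m + n)! * (m + n + 1)!) := by
  induction m with
  | zero =>
    rw [Icc_eq_empty_of_lt one_pos, prod_empty, prod_empty, mul_zero, zero_add]
    field_simp
  | succ m ih =>
    rw [prod_Icc_succ_top (by omega), prod_Icc_succ_top (by omega), mul_mul_mul_comm, ih,
      show 2 * (m + 1) + n + 1 = 2 * m + n + 1 + 1 + 1 by ring,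
      show m + 1 + n = m + n + 1 by ring,
      Nat.factorial_succ (2 * m + n + 1 + 1), Nat.factorial_succ (2 * m + n + 1),
      Nat.factorial_succ (m + n + 1), Nat.factorial_succ (m + n)]
    push_cast
    field_simp
    ring

lemma prod_Icc_two_mul_div_self (m : ℕ) : ∏ i ∈ Icc 1 m, ((2 * i : ℕ) : ℚ) / (i : ℕ) = 2 ^ m := by
  rw [prod_congr rfl (g := fun _ ↦ (2 : ℚ)), prod_const, Nat.card_Icc, Nat.add_sub_cancel]
  intro i hi
  have hi : (i : ℚ) ≠ 0 := by exact_mod_cast Nat.one_le_iff_ne_zero.1 (mem_Icc.1 hi).1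
  push_cast
  field_simp

lemma prod_range_prod_Icc_div (k m : ℕ) :
    ∏ j ∈ range (2 * k + 1), ∏ i ∈ Icc 1 m, ((2 * i + j : ℕ) : ℚ) / (i + j : ℕ) =
      2 ^ m * ∏ j ∈ range k, ((2 * (m + j + 1))! * (2 * j + 1)! : ℚ) /
        ((m + 2 * j + 1)! * (m + 2 * j + 2)!) := by
  rw [prod_range_succ', prod_range_two_mul, mul_comm]
  congr 1
  · exact prod_Icc_two_mul_div_self m
  · refine prod_congr rfl fun j _ ↦ ?_
    rw [prod_Icc_div_mul_prod_Icc_div m (2 * j + 1)]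
    ring_nf

/-- The determinant evaluation for Identity 2 in the odd case `n = 2k+1`:
`2^m · det( C(2m, m-i+j) - C(2m, m-i-j) )_{1≤i,j≤k}
  = ∏_{j=0}^{2k} ∏_{i=1}^{m} (2i+j)/(i+j)`
(with `0`-based `i, j` the entries read `C(2m, m-i+j) - C(2m, m-i-j-2)`). -/
theorem stmt_17 (k m : ℕ) (hk : 1 ≤ k) :
    (2 : ℚ) ^ m *
      Matrix.det (Matrix.of fun i j : Fin k =>
        binQ (2 * m) ((m : ℤ) - (i : ℤ) + (j : ℤ)) -
          binQ (2 * m) ((m : ℤ) - (i : ℤ) - (j : ℤ) - 2))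
    = ∏ j ∈ range (2 * k + 1), ∏ i ∈ Icc 1 m, ((2 * i + j : ℕ) : ℚ) / ((i + j : ℕ) : ℚ) := by
  rw [prod_range_prod_Icc_div, ← det_reflectedChoose_eq_prod]
  congr 3
  ext i j
  rw [reflectedChoose.eq_binQ_sub_binQ]
  ring_nf
end
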